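/- arXiv:2310.20449 — 2 statements merged into one kernel-verified Lean document; each statement's English description precedes it below -/
import Mathlib

section
/- Let (I_p) be a sieving system satisfying hypotheses (b), (c) and (e). Then ∑_{ν=1}^{B} ν·ρ_ν = 1. -/
open scoped BigOperators Classical

noncomputable section

/-- The set of primes `p ≤ t`. -/
def primesLe (t : ℝ) : Finset ℕ :=
  ((Finset.range (⌊t⌋₊ + 1)).filter Nat.Prime).filter (fun p => (p : ℝ) ≤ t)

/-- `σ(t) = ∏_{p ≤ t} (1 - |I_p|/p)`. -/
def sigmaLe (I : ∀ p : ℕ, Finset (ZMod p)) (t : ℝ) : ℝ :=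
  ∏ p ∈ primesLe t, (1 - ((I p).card : ℝ) / (p : ℝ))

open Filter Topology in
lemma aux_logratio : Tendsto (fun n : ℕ => Real.log ((n : ℝ) + 3) / Real.log n) atTop (𝓝 1) := by
  have h1 : Tendsto (fun n : ℕ => 1 + Real.log (1 + 3 / (n : ℝ)) / Real.log n) atTop (𝓝 (1 + 0)) := by
    apply Tendsto.const_add
    have h2 : Tendsto (fun n : ℕ => Real.log (1 + 3 / (n : ℝ))) atTop (𝓝 (Real.log (1 + 0))) := by
      apply Tendsto.log _ (by norm_num)
      exact (tendsto_const_div_atTop_nhds_zero_nat 3).const_add 1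
    exact h2.div_atTop (Real.tendsto_log_atTop.comp tendsto_natCast_atTop_atTop)
  rw [add_zero] at h1
  refine h1.congr' ?_
  filter_upwards [eventually_ge_atTop 2] with n hn
  have hn' : (2 : ℝ) ≤ n := by exact_mod_cast hn
  have hl : 0 < Real.log n := Real.log_pos (by linarith)
  have : (n : ℝ) + 3 = n * (1 + 3 / n) := by field_simp
  rw [this, Real.log_mul (by positivity) (by positivity)]
  field_simp

lemma aux_llow (n : ℕ) : 1 / (((n : ℝ) + 3) * Real.log (n + 3)) ≤
    Real.log (Real.log ((n : ℝ) + 3)) - Real.log (Real.log ((n : ℝ) + 2)) := by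
  have hn : (0 : ℝ) ≤ n := n.cast_nonneg
  have l2 : 0 < Real.log ((n : ℝ) + 2) := Real.log_pos (by linarith)
  have l3 : 0 < Real.log ((n : ℝ) + 3) := Real.log_pos (by linarith)
  rw [← Real.log_div l3.ne' l2.ne']
  have h := Real.one_sub_inv_le_log_of_pos (div_pos l3 l2)
  refine le_trans ?_ h
  have h2 := Real.one_sub_inv_le_log_of_pos (x := ((n : ℝ) + 3) / (n + 2)) (by positivity)
  rw [Real.log_div (by positivity) (by positivity)] at h2
  have e : 1 - (((n : ℝ) + 3) / (n + 2))⁻¹ = 1 / (n + 3) := by field_simp; ring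
  rw [e] at h2
  rw [inv_div, ← div_div, one_sub_div l3.ne']
  gcongr

lemma aux_lup (n : ℕ) : Real.log (Real.log ((n : ℝ) + 3)) - Real.log (Real.log ((n : ℝ) + 2))
    ≤ 1 / (((n : ℝ) + 2) * Real.log (n + 2)) := by
  have hn : (0 : ℝ) ≤ n := n.cast_nonneg
  have l2 : 0 < Real.log ((n : ℝ) + 2) := Real.log_pos (by linarith)
  have l3 : 0 < Real.log ((n : ℝ) + 3) := Real.log_pos (by linarith)
  rw [← Real.log_div l3.ne' l2.ne']
  refine le_trans (Real.log_le_sub_one_of_pos (div_pos l3 l2)) ?_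
  have h2 := Real.log_le_sub_one_of_pos (x := ((n : ℝ) + 3) / (n + 2)) (by positivity)
  rw [Real.log_div (by positivity) (by positivity)] at h2
  have e : (((n : ℝ) + 3) / (n + 2)) - 1 = 1 / (n + 2) := by field_simp; ring
  rw [e] at h2
  rw [← div_div, div_sub_one l2.ne']
  gcongr

open Filter Topology in
lemma aux_loglog : Tendsto (fun n : ℕ => Real.log (Real.log ((n : ℝ) + 2))) atTop atTop :=
  Real.tendsto_log_atTop.comp (Real.tendsto_log_atTop.comp
    (tendsto_atTop_add_const_right _ _ tendsto_natCast_atTop_atTop))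

open Filter Topology in
/-- `1 / ((n+1) log n g(n)) → 1`. -/
lemma aux_g : Tendsto (fun n : ℕ => 1 / (((n : ℝ) + 1) * Real.log n *
    (Real.log (Real.log ((n : ℝ) + 3)) - Real.log (Real.log ((n : ℝ) + 2))))) atTop (𝓝 1) := by
  have up : Tendsto (fun n : ℕ => (1 + 2 / ((n : ℝ) + 1)) * (Real.log ((n : ℝ) + 3) / Real.log n))
      atTop (𝓝 ((1 + 0) * 1)) := by
    refine Tendsto.mul ?_ aux_logratio
    apply Tendsto.const_add
    exact tendsto_const_nhds.div_atTop
      (tendsto_atTop_add_const_right _ _ tendsto_natCast_atTop_atTop)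
  rw [add_zero, one_mul] at up
  refine tendsto_of_tendsto_of_tendsto_of_le_of_le' tendsto_const_nhds up ?_ ?_
  all_goals
    filter_upwards [eventually_ge_atTop 2] with n hn
    have hn' : (2 : ℝ) ≤ n := by exact_mod_cast hn
    have l1 : 0 < Real.log (n : ℝ) := Real.log_pos (by linarith)
    have l2 : 0 < Real.log ((n : ℝ) + 2) := Real.log_pos (by linarith)
    have l3 : 0 < Real.log ((n : ℝ) + 3) := Real.log_pos (by linarith)
    have hlow := aux_llow n
    have hup := aux_lup n
    set g := Real.log (Real.log ((n : ℝ) + 3)) - Real.log (Real.log ((n : ℝ) + 2))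
    have gpos : 0 < g := lt_of_lt_of_le (by positivity) hlow
  · rw [le_div_iff₀ (by positivity), one_mul]
    rw [le_div_iff₀ (by positivity)] at hup
    refine le_trans ?_ hup
    rw [mul_comm g]
    have : Real.log (n : ℝ) ≤ Real.log ((n : ℝ) + 2) := Real.log_le_log (by linarith) (by linarith)
    gcongr
    norm_num
  · rw [div_le_iff₀ (by positivity)] at hlow
    rw [div_le_iff₀ (by positivity)]
    refine hlow.trans (le_of_eq ?_)
    field_simp
    ring

lemma aux_abel (a : ℕ → ℝ) (ha0 : a 0 = 0) (M : ℕ) :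
    ∑ n ∈ Finset.range M, a n / n = (∑ n ∈ Finset.range M, a n) / M +
      ∑ n ∈ Finset.range M, (∑ k ∈ Finset.range (n + 1), a k) / ((n : ℝ) * (n + 1)) := by
  induction M with
  | zero => simp
  | succ M ih =>
    rw [Finset.sum_range_succ, ih, Finset.sum_range_succ (fun n : ℕ => _ / ((n : ℝ) * (n + 1))),
      Finset.sum_range_succ a]
    rcases Nat.eq_zero_or_pos M with rfl | h
    · simp [ha0]
    · have : (0 : ℝ) < M := by exact_mod_cast h
      push_cast
      field_simp
      ring

open Filter Topology in
lemma aux_key (a : ℕ → ℝ) (B s : ℝ) (ha0 : a 0 = 0) (hn : ∀ n, 0 ≤ a n) (hB : ∀ n, a n ≤ B)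
    (hA : Tendsto (fun n : ℕ => (∑ k ∈ Finset.range (n + 1), a k) / ((n : ℝ) / Real.log n))
      atTop (𝓝 s)) :
    Tendsto (fun M : ℕ => (∑ n ∈ Finset.range M, a n / n) / Real.log (Real.log ((M : ℝ) + 2)))
      atTop (𝓝 s) := by
  set l : ℕ → ℝ := fun n => Real.log (Real.log ((n : ℝ) + 2)) with hl
  set g : ℕ → ℝ := fun n => l (n + 1) - l n with hg
  have hgeq : ∀ n, g n = Real.log (Real.log ((n : ℝ) + 3)) - Real.log (Real.log ((n : ℝ) + 2)) := by
    intro n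
    simp only [hg, hl]
    push_cast
    ring_nf
  have gpos : ∀ n, 0 < g n := by
    intro n
    rw [hgeq]
    have l3 : 0 < Real.log ((n : ℝ) + 3) :=
      Real.log_pos (by linarith [(n.cast_nonneg : (0 : ℝ) ≤ n)])
    exact lt_of_lt_of_le (by positivity) (aux_llow n)
  set h : ℕ → ℝ := fun n => (∑ k ∈ Finset.range (n + 1), a k) / ((n : ℝ) * (n + 1)) with hh
  have hsum : ∀ M, ∑ n ∈ Finset.range M, g n = l M - l 0 := Finset.sum_range_sub l
  have hlt : Tendsto l atTop atTop := aux_loglog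
  have hgt : Tendsto (fun M => ∑ n ∈ Finset.range M, g n) atTop atTop := by
    simp only [hsum]
    exact tendsto_atTop_add_const_right _ _ hlt
  have hq : Tendsto (fun n => h n / g n) atTop (𝓝 s) := by
    have := hA.mul aux_g
    rw [mul_one] at this
    refine this.congr' ?_
    filter_upwards [eventually_ge_atTop 2] with n hn
    have hn' : (2 : ℝ) ≤ n := by exact_mod_cast hn
    have l1 : 0 < Real.log (n : ℝ) := Real.log_pos (by linarith)
    rw [← hgeq]
    have := gpos n
    simp only [hh]
    field_simp
  have ho : (fun n => h n - s * g n) =o[atTop] g := by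
    rw [Asymptotics.isLittleO_iff_tendsto' (Eventually.of_forall fun n h0 => absurd h0 (gpos n).ne')]
    have := hq.sub_const s
    rw [sub_self] at this
    refine this.congr fun n => ?_
    have := gpos n
    field_simp
  have hO := ho.sum_range (fun n => (gpos n).le) hgt
  have h1 := hO.tendsto_div_nhds_zero
  have h2 : Tendsto (fun M => (l M - l 0) / l M) atTop (𝓝 1) := by
    have : Tendsto (fun M => 1 - l 0 / l M) atTop (𝓝 (1 - 0)) :=
      (tendsto_const_nhds.div_atTop hlt).const_sub 1
    rw [sub_zero] at this
    refine this.congr' ?_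
    filter_upwards [hlt.eventually_gt_atTop 0] with M hM
    field_simp
  have h3 : Tendsto (fun M : ℕ => ((∑ n ∈ Finset.range M, a n) / M) / l M) atTop (𝓝 0) := by
    refine squeeze_zero' (g := fun M => B / l M) ?_ ?_ (tendsto_const_nhds.div_atTop hlt)
    all_goals filter_upwards [hlt.eventually_gt_atTop 0, eventually_gt_atTop 0] with M hM hM0
    · have := Finset.sum_nonneg (s := Finset.range M) (fun n _ => hn n)
      positivity
    · have := Finset.sum_le_card_nsmul (Finset.range M) a B (fun n _ => hB n)
      have hM' : (0 : ℝ) < M := by exact_mod_cast hM0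
      gcongr
      rw [div_le_iff₀ hM']
      simpa [mul_comm] using this
  have h4 := h3.add ((h1.add_const s).mul h2)
  rw [zero_add, zero_add, mul_one] at h4
  refine h4.congr' ?_
  filter_upwards [hlt.eventually_gt_atTop 0, hlt.eventually_gt_atTop (l 0)] with M hM hM2
  rw [aux_abel a ha0 M, Finset.sum_sub_distrib, ← Finset.mul_sum, hsum]
  have : 0 < l M - l 0 := by linarith
  have e : l M = Real.log (Real.log ((M : ℝ) + 2)) := rfl
  rw [← e, add_div]
  congr 1
  field_simp
  ring

open Filter Topology in
lemma aux_err (a : ℕ → ℝ) (B : ℝ) (hn : ∀ n, 0 ≤ a n) (hB : ∀ n, a n ≤ B) :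
    Summable (fun n : ℕ => a n / n + Real.log (1 - a n / n)) := by
  have hs : Summable (fun n : ℕ => 2 * B ^ 2 * (1 / (n : ℝ) ^ 2)) :=
    (Real.summable_one_div_nat_pow.2 (by norm_num)).mul_left _
  refine Summable.of_norm_bounded_eventually_nat hs ?_
  filter_upwards [tendsto_natCast_atTop_atTop.eventually_ge_atTop (2 * B),
    eventually_gt_atTop 0] with n h1 h2
  have h2' : (0 : ℝ) < n := by exact_mod_cast h2
  have x0 : 0 ≤ a n / n := div_nonneg (hn n) h2'.le
  have xh : a n / n ≤ 1 / 2 := by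
    rw [div_le_iff₀ h2']
    linarith [hB n]
  have xB : a n / n ≤ B / n := by gcongr; exact hB n
  have h := Real.abs_log_sub_add_sum_range_le (x := a n / n) (by rw [abs_of_nonneg x0]; linarith) 1
  simp only [Finset.sum_range_one, zero_add, pow_one, Nat.cast_zero, div_one, abs_of_nonneg x0] at h
  rw [Real.norm_eq_abs]
  refine h.trans ?_
  rw [div_le_iff₀ (by linarith)]
  have : (a n / n) ^ 2 ≤ (B / n) ^ 2 := by gcongr
  have e : 2 * B ^ 2 * (1 / (n : ℝ) ^ 2) = 2 * (B / n) ^ 2 := by field_simp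
  rw [e]
  norm_num at *
  nlinarith [sq_nonneg (B / (n : ℝ))]

lemma aux_primesLe (n : ℕ) : primesLe (n : ℝ) = (Finset.range (n + 1)).filter Nat.Prime := by
  unfold primesLe
  ext p
  simp only [Nat.floor_natCast, Finset.mem_filter, Finset.mem_range, Nat.cast_le]
  constructor
  · exact fun h => h.1
  · exact fun h => ⟨h, by omega⟩

/-- If the sieving system `(I_p)` satisfies hypotheses (b), (c) and (e), then
`∑_{ν=1}^B ν ρ_ν = 1`. -/
theorem stmt17 (I : ∀ p : ℕ, Finset (ZMod p)) (B : ℕ) (ρ : ℕ → ℝ)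
    -- (b)
    (hypb : ∀ p : ℕ, p.Prime → (I p).card ≤ B)
    -- (c)
    (hypc : ∃ C₁ : ℝ, 0 < C₁ ∧
      Filter.Tendsto (fun x : ℝ => sigmaLe I x * Real.log x) Filter.atTop (nhds C₁))
    -- (e)
    (hype : ∀ ν : ℕ, 1 ≤ ν → ν ≤ B →
      Filter.Tendsto (fun x : ℝ =>
          (((primesLe x).filter (fun p => (I p).card = ν)).card : ℝ) / (x / Real.log x))
        Filter.atTop (nhds (ρ ν))) :
    ∑ ν ∈ Finset.Icc 1 B, (ν : ℝ) * ρ ν = 1 := by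
  obtain ⟨C, hC, hlim⟩ := hypc
  set a : ℕ → ℝ := fun n => if n.Prime then ((I n).card : ℝ) else 0 with ha
  have a0 : a 0 = 0 := by simp [ha, Nat.not_prime_zero]
  have an : ∀ n, 0 ≤ a n := by intro n; simp only [ha]; split_ifs <;> positivity
  have aB : ∀ n, a n ≤ (B : ℝ) := by
    intro n
    simp only [ha]
    split_ifs with h
    · exact_mod_cast hypb n h
    · positivity
  -- the counting asymptotics
  have hA : Filter.Tendsto (fun n : ℕ => (∑ k ∈ Finset.range (n + 1), a k) / ((n : ℝ) / Real.log n))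
      Filter.atTop (nhds (∑ ν ∈ Finset.Icc 1 B, (ν : ℝ) * ρ ν)) := by
    have h1 : Filter.Tendsto (fun n : ℕ => ∑ ν ∈ Finset.Icc 1 B, (ν : ℝ) *
        ((((primesLe (n : ℝ)).filter (fun p => (I p).card = ν)).card : ℝ) / ((n : ℝ) / Real.log n)))
        Filter.atTop (nhds (∑ ν ∈ Finset.Icc 1 B, (ν : ℝ) * ρ ν)) := by
      refine tendsto_finsetSum _ fun ν hν => ?_
      rw [Finset.mem_Icc] at hν
      exact ((hype ν hν.1 hν.2).comp tendsto_natCast_atTop_atTop).const_mul _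
    refine h1.congr fun n => ?_
    simp only [← mul_div_assoc]
    rw [← Finset.sum_div]
    congr 1
    simp only [ha]
    rw [← Finset.sum_filter, ← aux_primesLe]
    have hm : ∀ p ∈ primesLe (n : ℝ), (I p).card ∈ Finset.range (B + 1) := by
      intro p hp
      rw [aux_primesLe, Finset.mem_filter] at hp
      have := hypb p hp.2
      simp only [Finset.mem_range]
      omega
    rw [← Finset.sum_fiberwise_of_maps_to hm]
    rw [Finset.sum_range_succ', Finset.range_eq_Ico, Finset.sum_Ico_add'
      (fun j => ∑ i ∈ primesLe (n : ℝ) with (I i).card = j, ((I i).card : ℝ))]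
    have hz : ∑ i ∈ primesLe (n : ℝ) with (I i).card = 0, ((I i).card : ℝ) = 0 := by
      refine Finset.sum_eq_zero fun i hi => ?_
      rw [Finset.mem_filter] at hi
      simp [hi.2]
    rw [hz, add_zero, zero_add]
    have hI : Finset.Icc 1 B = Finset.Ico 1 (B + 1) := by
      ext; simp only [Finset.mem_Icc, Finset.mem_Ico]; omega
    rw [hI]
    refine Finset.sum_congr rfl fun ν _ => ?_
    rw [Finset.sum_congr rfl (g := fun _ => (ν : ℝ))
      (fun i hi => by rw [(Finset.mem_filter.1 hi).2])]
    rw [Finset.sum_const, nsmul_eq_mul, mul_comm]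
  have key := aux_key a B _ a0 an aB hA
  -- the logarithm of the product
  have hlimN : Filter.Tendsto (fun n : ℕ => sigmaLe I n * Real.log n) Filter.atTop (nhds C) :=
    hlim.comp tendsto_natCast_atTop_atTop
  have hTn : ∀ᶠ n : ℕ in Filter.atTop, Real.log (sigmaLe I n * Real.log n) =
      ∑ k ∈ Finset.range (n + 1), Real.log (1 - a k / k) + Real.log (Real.log n) := by
    filter_upwards [hlimN.eventually (lt_mem_nhds hC)] with n hn
    have hs : sigmaLe I n ≠ 0 := fun h => by simp [h] at hn
    have hl : Real.log n ≠ 0 := fun h => by simp [h] at hn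
    rw [Real.log_mul hs hl]
    congr 1
    unfold sigmaLe at hs ⊢
    rw [Finset.prod_ne_zero_iff] at hs
    rw [Real.log_prod hs, aux_primesLe, Finset.sum_filter]
    refine Finset.sum_congr rfl fun k _ => ?_
    simp only [ha]
    split_ifs <;> simp
  have hT : Filter.Tendsto (fun n : ℕ => ∑ k ∈ Finset.range (n + 1), Real.log (1 - a k / k) +
      Real.log (Real.log n)) Filter.atTop (nhds (Real.log C)) :=
    (hlimN.log hC.ne').congr' hTn
  have hE := ((aux_err a B an aB).hasSum.tendsto_sum_nat).comp (Filter.tendsto_add_atTop_nat 1)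
  have hR : Filter.Tendsto (fun n : ℕ => Real.log (Real.log ((n : ℝ) + 3) / Real.log n)) Filter.atTop
      (nhds (Real.log 1)) := aux_logratio.log one_ne_zero
  have hl1 := aux_loglog.comp (Filter.tendsto_add_atTop_nat 1)
  have hF := (((hE.sub hT).sub hR).div_atTop hl1).add_const 1
  rw [zero_add] at hF
  refine tendsto_nhds_unique (key.comp (Filter.tendsto_add_atTop_nat 1)) (hF.congr' ?_)
  filter_upwards [hl1.eventually_gt_atTop 0, Filter.eventually_ge_atTop 2] with n hn hn2
  have hn' : (2 : ℝ) ≤ n := by exact_mod_cast hn2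
  have l1 : 0 < Real.log (n : ℝ) := Real.log_pos (by linarith)
  have l3 : 0 < Real.log ((n : ℝ) + 3) := Real.log_pos (by linarith)
  have e : ((n + 1 : ℕ) : ℝ) + 2 = n + 3 := by push_cast; ring
  simp only [Function.comp_apply, e] at hn ⊢
  rw [Finset.sum_add_distrib, Real.log_div l3.ne' l1.ne', div_add_one hn.ne']
  congr 1
  ring

end
end

section
/- Let f̃ ∈ ℤ[x] be a polynomial of degree d ≥ 1 with leading coefficient c, and write f̃ = c·∏_{i=1}^d (x − r_i) with complex roots r_1, …, r_d. Then for any polynomial g ∈ ℤ[x] with deg g ≤ d − 1, the polynomial c^{d(d−1)} · ∏_{i=1}^d g(x + r_i) has integer coefficients. -/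
open scoped BigOperators Classical

noncomputable section

/-- If `f̃ ∈ ℤ[x]` has degree `d ≥ 1`, leading coefficient `c` and complex roots
`r_1, …, r_d` (with multiplicity), then for any `g ∈ ℤ[x]` with `deg g ≤ d-1` the
polynomial `c^{d(d-1)} ∏_{i=1}^d g(x + r_i)` has integer coefficients. -/
theorem stmt18 (ft : Polynomial ℤ) (d : ℕ) (hdeg : ft.natDegree = d) (hd1 : 1 ≤ d)
    (c : ℤ) (hc : c = ft.leadingCoeff)
    (r : Fin d → ℂ)
    (hroots : ft.map (Int.castRingHom ℂ)
      = Polynomial.C (c : ℂ) * ∏ i : Fin d, (Polynomial.X - Polynomial.C (r i)))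
    (g : Polynomial ℤ) (hg : g.natDegree ≤ d - 1) :
    ∃ h : Polynomial ℤ, h.map (Int.castRingHom ℂ)
      = Polynomial.C ((c : ℂ) ^ (d * (d - 1))) *
          ∏ i : Fin d, (g.map (Int.castRingHom ℂ)).comp (Polynomial.X + Polynomial.C (r i)) := by
  obtain ⟨n, rfl⟩ : ∃ n, d = n + 1 := ⟨d - 1, by omega⟩
  simp only [Nat.add_sub_cancel] at hg ⊢
  let φ : Polynomial ℤ →+* Polynomial ℂ := Polynomial.mapRingHom (Int.castRingHom ℂ)
  let F : Polynomial (Polynomial ℤ) := ft.map Polynomial.C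
  let G : Polynomial (Polynomial ℤ) :=
    (g.map Polynomial.C).comp (Polynomial.X + Polynomial.C Polynomial.X)
  refine ⟨Polynomial.C (c ^ (n * n)) * Polynomial.resultant F G (n + 1) n, ?_⟩
  have hφC : φ.comp Polynomial.C = (Polynomial.C).comp (Int.castRingHom ℂ) :=
    RingHom.ext_int _ _
  have hF : F.map φ = Polynomial.C (Polynomial.C (c : ℂ)) *
      ∏ i : Fin (n + 1), (Polynomial.X - Polynomial.C (Polynomial.C (r i))) := by
    have := congrArg (Polynomial.map (Polynomial.C : ℂ →+* Polynomial ℂ)) hroots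
    simp only [F, Polynomial.map_map, hφC]
    rw [Polynomial.map_map] at this
    rw [this]
    simp [Polynomial.map_mul, Polynomial.map_prod]
  have hG : G.map φ = ((g.map (Int.castRingHom ℂ)).map Polynomial.C).comp
      (Polynomial.X + Polynomial.C Polynomial.X) := by
    simp only [G, Polynomial.map_comp, Polynomial.map_map, hφC]
    simp [φ]
  have hGdeg : (G.map φ).natDegree ≤ n := by
    rw [hG]
    refine Polynomial.natDegree_comp_le.trans ?_
    rw [Polynomial.natDegree_X_add_C, mul_one]
    exact Polynomial.natDegree_map_le.trans (Polynomial.natDegree_map_le.trans hg)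
  have hev : ∀ i, (G.map φ).eval (Polynomial.C (r i)) =
      (g.map (Int.castRingHom ℂ)).comp (Polynomial.X + Polynomial.C (r i)) := by
    intro i
    rw [hG, Polynomial.eval_comp, Polynomial.eval_map]
    simp [Polynomial.comp, add_comm]
  have hres : φ (Polynomial.resultant F G (n + 1) n) = Polynomial.C (c : ℂ) ^ n *
      ∏ i : Fin (n + 1),
        (g.map (Int.castRingHom ℂ)).comp (Polynomial.X + Polynomial.C (r i)) := by
    rw [← Polynomial.resultant_map_map, hF, Polynomial.resultant_C_mul_left]
    congr 1
    have h := Polynomial.resultant_prod_left Finset.univ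
      (fun i : Fin (n + 1) => Polynomial.X - Polynomial.C (Polynomial.C (r i)))
      (G.map φ) n (by simp) hGdeg
    rw [Polynomial.natDegree_finsetProd_X_sub_C_eq_card] at h
    simp only [Finset.card_univ, Fintype.card_fin, Polynomial.natDegree_X_sub_C] at h
    rw [h]
    refine Finset.prod_congr rfl fun i _ => ?_
    rw [Polynomial.resultant_X_sub_C_left _ _ _ hGdeg, hev]
  change φ _ = _
  rw [map_mul, hres, ← mul_assoc]
  congr 1
  simp [φ]
  ring

end
end
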